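/- Let p be an odd prime, n a positive integer, q = p^n, and let k be a finite field with q² elements. Let G = k^× ⋊ ℤ be the semidirect product in which m ∈ ℤ acts on k^× by the m-th power of the automorphism x ↦ x^q. Then the 2-torsion subgroup of H²(G, ℂ^×) (with ℂ^× a trivial G-module) is isomorphic to ℤ/2ℤ; that is, there is exactly one nonzero class c ∈ H²(G, ℂ^×) with 2·c = 0. -/

import Mathlib

open groupCohomology

noncomputable section

/-!
Let `σ` be an automorphism of a group `A` and `M` an abelian group with trivial action such that
`H²(A, M) = 0`. A central extension of `A ⋊ ℤ` by `M` splits over `A`; conjugating the splitting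
by a lift of `1 : ℤ` moves it by a character `χ` of `A`, and `χ` determines the extension. Hence
`Hom(A, M) → H²(A ⋊ ℤ, M)` is onto, and its kernel turns out to be the image of `σ^* - 1`.

If `A` is finite cyclic and `M` is divisible by `|A|` and has enough roots of unity, then
`H²(A, M) = 0` and `Hom(A, M)` is cyclic of order `|A|`. So `H²(A ⋊ ℤ, M)` is cyclic, and its order
is that of the cokernel of `σ^* - 1`, that is, of its kernel. When `|A|` is even, that kernel
contains the only character of order 2, so the order of `H²(A ⋊ ℤ, M)` is even too. A finite cyclic
group of even order has exactly one element of order 2.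
-/

universe u

theorem existsUnique_orderOf_eq_two (C : Type*) [Group C] [IsCyclic C] [Finite C]
    (hC : Even (Nat.card C)) : ∃! c : C, orderOf c = 2 := by
  classical
  have := Fintype.ofFinite C
  rw [Fintype.existsUnique_iff_card_one, IsCyclic.card_orderOf_eq_totient, Nat.totient_two]
  exact Nat.card_eq_fintype_card (α := C) ▸ hC.two_dvd

theorem semiconj_zpow_smul {α β X Y : Type*} [Group α] [Group β] [MulAction α X]
    [MulAction β Y] {f : X → Y} {a : α} {b : β} (h : Function.Semiconj f (a • ·) (b • ·)) (m : ℤ) :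
    Function.Semiconj f (a ^ m • ·) (b ^ m • ·) := by
  have hpow (n : ℕ) : Function.Semiconj f (a ^ n • ·) (b ^ n • ·) := by
    simpa only [smul_iterate] using h.iterate_right n
  cases m with
  | ofNat n => simpa only [Int.ofNat_eq_natCast, zpow_natCast] using hpow n
  | negSucc n =>
    simp only [zpow_negSucc]
    exact (hpow (n + 1)).inverses_right (smul_inv_smul _) (inv_smul_smul _)

section TwistedPower

variable {A B C : Type*} [Group A] [CommGroup B] [CommGroup C]
  (σ : MulAut A) (χ : A →* B)

/-- The automorphism `(a, b) ↦ (σ a, b * χ a)` of `A × B`, whose powers give rise to the twisted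
powers of `χ`. -/
def shear : MulAut (A × B) where
  toFun x := (σ x.1, x.2 * χ x.1)
  invFun x := (σ⁻¹ x.1, x.2 / χ (σ⁻¹ x.1))
  left_inv x := by simp
  right_inv x := by simp
  map_mul' x y := by simp [mul_mul_mul_comm]

@[simp]
theorem shear_apply (a : A) (b : B) : shear σ χ (a, b) = (σ a, b * χ a) := rfl

/-- The twisted powers of `χ`, which for `m ≥ 0` are `∏ i < m, χ ∘ σ ^ i`. Reading them off the
powers of `shear σ χ` covers negative `m` as well. -/
def twistedZPow (m : ℤ) : A →* B :=
  (MonoidHom.snd A B).comp ((shear σ χ ^ m).toMonoidHom.comp (MonoidHom.inl A B))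

theorem twistedZPow_apply (m : ℤ) (a : A) :
    twistedZPow σ χ m a = ((shear σ χ ^ m) (a, 1)).2 := rfl

@[simp]
theorem twistedZPow_one : twistedZPow σ χ 1 = χ := by
  ext a
  simp [twistedZPow_apply]

theorem shear_zpow_apply (m : ℤ) (a : A) (b : B) :
    (shear σ χ ^ m) (a, b) = ((σ ^ m) a, b * twistedZPow σ χ m a) := by
  have hfst (x : A × B) : ((shear σ χ ^ m) x).1 = (σ ^ m) x.1 :=
    semiconj_zpow_smul (f := Prod.fst) (a := shear σ χ) (b := σ) (fun _ => rfl) m x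
  have hinr : (shear σ χ ^ m) (1, b) = (1, b) := by
    have h := semiconj_zpow_smul (f := MonoidHom.inr A B) (a := (1 : MulAut B)) (b := shear σ χ)
      (fun y => by simp [MulAut.smul_def]) m b
    simpa [MulAut.smul_def] using h.symm
  have hmul : (shear σ χ ^ m) (a, b) = (shear σ χ ^ m) (1, b) * (shear σ χ ^ m) (a, 1) := by
    simp [← map_mul]
  rw [hmul, hinr]
  exact Prod.ext (by simp [hfst]) rfl

theorem twistedZPow_add (m n : ℤ) (a : A) :
    twistedZPow σ χ (m + n) a = twistedZPow σ χ m ((σ ^ n) a) * twistedZPow σ χ n a := by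
  rw [twistedZPow_apply, zpow_add, MulAut.mul_apply, shear_zpow_apply σ χ n, shear_zpow_apply,
    one_mul, mul_comm]

theorem twistedZPow_comp (β : B →* C) (m : ℤ) :
    twistedZPow σ (β.comp χ) m = β.comp (twistedZPow σ χ m) := by
  ext a
  have h := semiconj_zpow_smul (f := Prod.map id β) (a := shear σ χ) (b := shear σ (β.comp χ))
    (fun x => by simp [MulAut.smul_def, shear]) m (a, 1)
  simpa [MulAut.smul_def, shear_zpow_apply] using (congrArg Prod.snd h).symm

theorem twistedZPow_mul (ψ : A →* B) (m : ℤ) :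
    twistedZPow σ (χ * ψ) m = twistedZPow σ χ m * twistedZPow σ ψ m := by
  have hfst := twistedZPow_comp σ (χ.prod ψ) (MonoidHom.fst B B) m
  have hsnd := twistedZPow_comp σ (χ.prod ψ) (MonoidHom.snd B B) m
  have hmul := twistedZPow_comp σ (χ.prod ψ) mulMonoidHom m
  rw [MonoidHom.fst_comp_prod] at hfst
  rw [MonoidHom.snd_comp_prod] at hsnd
  have hprod : mulMonoidHom.comp (χ.prod ψ) = χ * ψ := MonoidHom.ext fun _ => rfl
  rw [hprod] at hmul
  rw [hmul, hfst, hsnd]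
  exact MonoidHom.ext fun _ => rfl

variable (B) in
/-- The endomorphism `σ^* - 1` of the character group `A →* B`, written multiplicatively. -/
def pullbackDiv : (A →* B) →* (A →* B) :=
  MonoidHom.compHom' σ.toMonoidHom / MonoidHom.id _

@[simp]
theorem pullbackDiv_apply (ψ : A →* B) (a : A) : pullbackDiv B σ ψ a = ψ (σ a) / ψ a := rfl

theorem twistedZPow_pullbackDiv (ψ : A →* B) (m : ℤ) (a : A) :
    twistedZPow σ (pullbackDiv B σ ψ) m a = ψ ((σ ^ m) a) / ψ a := by
  have h := semiconj_zpow_smul (f := fun x : A × B => x.2 / ψ x.1)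
    (a := shear σ (pullbackDiv B σ ψ)) (b := (1 : MulAut B))
    (fun x => by simp [MulAut.smul_def, shear, div_eq_mul_inv, mul_assoc]) m (a, 1)
  have hdiv : twistedZPow σ (pullbackDiv B σ ψ) m a / ψ ((σ ^ m) a) = 1 / ψ a := by
    simpa [MulAut.smul_def, shear_zpow_apply] using h
  rw [div_eq_iff_eq_mul.1 hdiv, one_div_mul_eq_div]

theorem even_natCard_ker_pullbackDiv [IsCyclic (A →* B)] [Finite (A →* B)]
    (heven : Even (Nat.card (A →* B))) : Even (Nat.card (pullbackDiv B σ).ker) := by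
  obtain ⟨χ, hχ, huniq⟩ := existsUnique_orderOf_eq_two (A →* B) heven
  have hinj : Function.Injective (MonoidHom.compHom' σ.toMonoidHom : (A →* B) →* (A →* B)) :=
    fun _ _ h => (MonoidHom.cancel_right σ.surjective).1 h
  have hfixed : MonoidHom.compHom' σ.toMonoidHom χ = χ :=
    huniq _ ((orderOf_injective _ hinj χ).trans hχ)
  have hker : χ ∈ (pullbackDiv B σ).ker := div_eq_one.2 hfixed
  exact even_iff_two_dvd.2 (hχ ▸ Subgroup.orderOf_dvd_natCard _ hker)

variable {σ χ} in
theorem zpow_conj_eq_twistedZPow_mul {E : Type*} [Group E] {s : A →* E} {ι : B →* E} {t : E}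
    (hι : ∀ b, Commute t (ι b)) (h : ∀ a, t * s a * t⁻¹ = ι (χ a) * s (σ a)) (m : ℤ) (a : A) :
    t ^ m * s a * (t ^ m)⁻¹ = ι (twistedZPow σ χ m a) * s ((σ ^ m) a) := by
  have hconj := semiconj_zpow_smul (f := fun x : A × B => ι x.2 * s x.1) (a := shear σ χ)
    (b := MulAut.conj t) (fun x => by
      simp [MulAut.smul_def, shear, mul_assoc, ← h, (hι _).left_comm]) m (a, 1)
  simpa [MulAut.smul_def, shear_zpow_apply, ← map_zpow] using hconj.symm

end TwistedPower

section Extension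

variable {k G A M : Type u} [CommRing k] [Group G] [Group A] [AddCommGroup M] [Module k M]

theorem mem_cocycles₂_trivial_iff {f : G × G → M} :
    f ∈ cocycles₂ (Rep.trivial k G M) ↔
      ∀ x y z, f (x * y, z) + f (x, y) = f (y, z) + f (x, y * z) :=
  mem_cocycles₂_iff (A := Rep.trivial k G M) f

theorem cocycles₂_trivial_map_mul (f : cocycles₂ (Rep.trivial k G M)) (x y z : G) :
    f (x * y, z) + f (x, y) = f (y, z) + f (x, y * z) :=
  mem_cocycles₂_trivial_iff.1 f.2 x y z

theorem H2π_trivial_eq_zero_iff {f : cocycles₂ (Rep.trivial k G M)} :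
    H2π _ f = 0 ↔ ∃ h : G → M, ∀ x y, h y - h (x * y) + h x = f (x, y) := by
  rw [H2π_eq_zero_iff]
  exact exists_congr fun h => funext_iff.trans Prod.forall

/-- The central extension of `G` by `M` with factor set the 2-cocycle `f`: the set `M × G` with
multiplication `(m, x) * (n, y) = (m + n + f (x, y), x * y)`. As `f` need not be normalized, the
unit is `(-f (1, 1), 1)`. -/
@[ext]
structure CentralExtension (f : cocycles₂ (Rep.trivial k G M)) where
  coeff : M
  base : G

namespace CentralExtension

variable {f f' : cocycles₂ (Rep.trivial k G M)}

instance : Mul (CentralExtension f) :=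
  ⟨fun a b => ⟨a.coeff + b.coeff + f (a.base, b.base), a.base * b.base⟩⟩

instance : One (CentralExtension f) := ⟨⟨-f (1, 1), 1⟩⟩

instance : Inv (CentralExtension f) :=
  ⟨fun a => ⟨-a.coeff - f (a.base⁻¹, a.base) - f (1, 1), a.base⁻¹⟩⟩

@[simp] theorem coeff_mul (a b : CentralExtension f) :
    (a * b).coeff = a.coeff + b.coeff + f (a.base, b.base) := rfl

@[simp] theorem base_mul (a b : CentralExtension f) : (a * b).base = a.base * b.base := rfl

@[simp] theorem coeff_one : (1 : CentralExtension f).coeff = -f (1, 1) := rfl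

@[simp] theorem base_one : (1 : CentralExtension f).base = 1 := rfl

@[simp] theorem coeff_inv (a : CentralExtension f) :
    a⁻¹.coeff = -a.coeff - f (a.base⁻¹, a.base) - f (1, 1) := rfl

@[simp] theorem base_inv (a : CentralExtension f) : a⁻¹.base = a.base⁻¹ := rfl

@[simp] theorem factorSet_one_left (x : G) : f (1, x) = f (1, 1) := cocycles₂_map_one_fst f x

@[simp] theorem factorSet_one_right (x : G) : f (x, 1) = f (1, 1) := cocycles₂_map_one_snd f x

instance : Group (CentralExtension f) :=
  Group.ofLeftAxioms
    (fun a b c => by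
      ext
      · calc (a * b * c).coeff
          _ = a.coeff + b.coeff + c.coeff
                + (f (a.base * b.base, c.base) + f (a.base, b.base)) := by
            simp only [coeff_mul, base_mul]; abel
          _ = a.coeff + b.coeff + c.coeff
                + (f (b.base, c.base) + f (a.base, b.base * c.base)) := by
            rw [cocycles₂_trivial_map_mul]
          _ = (a * (b * c)).coeff := by simp only [coeff_mul, base_mul]; abel
      · exact mul_assoc ..)
    (fun a => by ext <;> simp)
    (fun a => by
      ext
      · simp only [coeff_mul, coeff_inv, base_inv, coeff_one]
        abel
      · exact inv_mul_cancel _)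

/-- The projection of the extension onto `G`. -/
def proj : CentralExtension f →* G where
  toFun := base
  map_one' := rfl
  map_mul' _ _ := rfl

@[simp] theorem proj_apply (a : CentralExtension f) : proj a = a.base := rfl

/-- The inclusion of the coefficients as a central subgroup; the shift by `f (1, 1)` makes it send
`0` to the unit. -/
def incl : Multiplicative M →* CentralExtension f where
  toFun m := ⟨m.toAdd - f (1, 1), 1⟩
  map_one' := by ext <;> simp
  map_mul' m n := by
    ext
    · simp only [coeff_mul, toAdd_mul]
      abel
    · exact (one_mul 1).symm

theorem incl_mul (m : Multiplicative M) (a : CentralExtension f) :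
    incl m * a = ⟨m.toAdd + a.coeff, a.base⟩ := by
  ext
  · simp only [incl, MonoidHom.coe_mk, OneHom.coe_mk, coeff_mul, factorSet_one_left]
    abel
  · exact one_mul _

theorem commute_incl (a : CentralExtension f) (m : Multiplicative M) : Commute a (incl m) := by
  ext
  · simp only [incl_mul, coeff_mul]
    simp only [incl, MonoidHom.coe_mk, OneHom.coe_mk, factorSet_one_right]
    abel
  · exact (mul_one a.base).trans (one_mul a.base).symm

theorem H2π_eq_of_section (s : G → CentralExtension f) (hbase : ∀ x, (s x).base = x)
    (hmul : ∀ x y, s x * s y = incl (.ofAdd (f' (x, y))) * s (x * y)) :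
    H2π (Rep.trivial k G M) f = H2π _ f' := by
  rw [← sub_eq_zero, ← map_sub, H2π_trivial_eq_zero_iff]
  refine ⟨fun x => -(s x).coeff, fun x y => ?_⟩
  have h := congrArg coeff (hmul x y)
  simp only [incl_mul, coeff_mul, hbase, toAdd_ofAdd] at h
  calc -(s y).coeff - -(s (x * y)).coeff + -(s x).coeff
      = f' (x, y) + (s (x * y)).coeff - ((s x).coeff + (s y).coeff) - f' (x, y) := by abel
    _ = f (x, y) - f' (x, y) := by rw [← h, add_sub_cancel_left]

theorem exists_lift [Subsingleton (H2 (Rep.trivial k A M))] (f : cocycles₂ (Rep.trivial k G M))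
    (j : A →* G) : ∃ s : A →* CentralExtension f, proj.comp s = j := by
  have hpull : (fun p : A × A => f (j p.1, j p.2)) ∈ cocycles₂ (Rep.trivial k A M) :=
    mem_cocycles₂_trivial_iff.2 fun x y z => by
      simpa only [map_mul] using cocycles₂_trivial_map_mul f (j x) (j y) (j z)
  obtain ⟨h, hh⟩ := H2π_trivial_eq_zero_iff.1
    (Subsingleton.elim (H2π (Rep.trivial k A M) ⟨_, hpull⟩) 0)
  refine ⟨MonoidHom.mk' (fun a => ⟨-h a, j a⟩) fun x y => ?_, rfl⟩
  ext
  · have hxy : h y - h (x * y) + h x = f (j x, j y) := hh x y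
    simp only [coeff_mul, ← hxy]
    abel
  · exact map_mul j x y

theorem exists_eq_incl_mul_of_proj_comp_eq {s s' : A →* CentralExtension f}
    (h : proj.comp s' = proj.comp s) :
    ∃ χ : A →* Multiplicative M, ∀ a, s' a = incl (χ a) * s a := by
  have hbase (a : A) : (s' a).base = (s a).base := DFunLike.congr_fun h a
  refine ⟨MonoidHom.mk' (fun a => .ofAdd ((s' a).coeff - (s a).coeff)) fun x y => ?_, fun a => ?_⟩
  · rw [← ofAdd_add, map_mul, map_mul, coeff_mul, coeff_mul, hbase, hbase]
    congr 1
    abel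
  · rw [incl_mul, MonoidHom.mk'_apply, toAdd_ofAdd, sub_add_cancel, ← hbase]

end CentralExtension

end Extension

section SemidirectProduct

open CentralExtension

variable {k A M : Type u} [CommRing k] [Group A] [AddCommGroup M] [Module k M]

/-- The mapping torus `A ⋊ ℤ` of an automorphism `σ` of `A`, in which `1 : ℤ` acts by `σ`. -/
abbrev MappingTorus (σ : MulAut A) : Type u :=
  A ⋊[zpowersHom (MulAut A) σ] Multiplicative ℤ

namespace MappingTorus

variable (k) in
/-- The 2-cocycle `((a, m), (b, n)) ↦ χ_m b` of the mapping torus, where `χ_m` is the `m`-th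
twisted power of the character `χ`. -/
def cocycle (σ : MulAut A) (χ : A →* Multiplicative M) :
    cocycles₂ (Rep.trivial k (MappingTorus σ) M) :=
  ⟨fun x => (twistedZPow σ χ x.1.right.toAdd x.2.left).toAdd,
    mem_cocycles₂_trivial_iff.2 fun x y z => by
      simp only [SemidirectProduct.mul_left, SemidirectProduct.mul_right, toAdd_mul,
        twistedZPow_add, zpowersHom_apply, map_mul]
      abel⟩

theorem cocycle_apply (σ : MulAut A) (χ : A →* Multiplicative M) (x y : MappingTorus σ) :
    cocycle k σ χ (x, y) = (twistedZPow σ χ x.right.toAdd y.left).toAdd := rfl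

variable (k M) in
/-- The homomorphism sending a character `χ` of `A` to the class of the 2-cocycle
`((a, m), (b, n)) ↦ χ_m b` of the mapping torus. -/
def H2OfHom (σ : MulAut A) :
    (A →* Multiplicative M) →* Multiplicative (H2 (Rep.trivial k (MappingTorus σ) M)) :=
  MonoidHom.mk' (fun χ => .ofAdd (H2π _ (cocycle k σ χ))) fun χ ψ => by
    rw [← ofAdd_add, ← map_add]
    congr 2
    ext x
    exact DFunLike.congr_fun (twistedZPow_mul σ χ ψ _) _

theorem mem_ker_H2OfHom_iff {σ : MulAut A} {χ : A →* Multiplicative M} :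
    χ ∈ (H2OfHom k M σ).ker ↔ ∃ h : MappingTorus σ → M, ∀ x y,
      h y - h (x * y) + h x = (twistedZPow σ χ x.right.toAdd y.left).toAdd :=
  H2π_trivial_eq_zero_iff

theorem inr_mul_inl (σ : MulAut A) (a : A) :
    (.inr (.ofAdd 1) * .inl a : MappingTorus σ) = .inl (σ a) * .inr (.ofAdd 1) := by
  rw [← mul_inv_eq_iff_eq_mul, ← map_inv]
  exact (SemidirectProduct.inl_aut (φ := zpowersHom _ σ) (.ofAdd 1) a).symm

theorem ker_H2OfHom (σ : MulAut A) :
    (H2OfHom k M σ).ker = (pullbackDiv (Multiplicative M) σ).range := by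
  refine le_antisymm (fun χ hχ => ?_) ?_
  · obtain ⟨h, hh⟩ := mem_ker_H2OfHom_iff.1 hχ
    have hinl (a : A) (y : MappingTorus σ) : h (.inl a * y) = h (.inl a) + h y := by
      have hay : h y - h (.inl a * y) + h (.inl a) = 0 := hh (.inl a) y
      rw [← sub_eq_zero, ← neg_eq_zero, ← hay]
      abel
    have hinr (a : A) :
        h (.inl a) - h (.inr (.ofAdd 1) * .inl a) + h (.inr (.ofAdd 1)) = (χ a).toAdd := by
      simpa using hh (.inr (.ofAdd 1)) (.inl a)
    refine ⟨MonoidHom.mk' (fun a => .ofAdd (-h (.inl a))) fun a b => ?_, ?_⟩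
    · rw [map_mul, hinl, neg_add, ofAdd_add]
    · ext a
      change -h (.inl (σ a)) - -h (.inl a) = (χ a).toAdd
      rw [← hinr, inr_mul_inl, hinl]
      abel
  · rintro _ ⟨ψ, rfl⟩
    refine mem_ker_H2OfHom_iff.2 ⟨fun x => -(ψ x.left).toAdd, fun x y => ?_⟩
    simp only [SemidirectProduct.mul_left, zpowersHom_apply, map_mul, toAdd_mul,
      twistedZPow_pullbackDiv, toAdd_div]
    abel

theorem H2π_eq_of_conj {σ : MulAut A} {χ : A →* Multiplicative M}
    {f : cocycles₂ (Rep.trivial k (MappingTorus σ) M)} {s : A →* CentralExtension f}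
    {t : CentralExtension f} (hs : proj.comp s = SemidirectProduct.inl)
    (ht : proj t = .inr (.ofAdd 1)) (h : ∀ a, t * s a * t⁻¹ = incl (χ a) * s (σ a)) :
    H2π _ f = H2π _ (cocycle k σ χ) := by
  have hcomm (m : ℤ) (a : A) : t ^ m * s a = incl (twistedZPow σ χ m a) * s ((σ ^ m) a) * t ^ m :=
    mul_inv_eq_iff_eq_mul.1 (zpow_conj_eq_twistedZPow_mul (commute_incl t) h m a)
  refine H2π_eq_of_section (fun x => s x.left * t ^ x.right.toAdd) (fun x => ?_) fun x y => ?_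
  · have hbase : proj (s x.left) = .inl x.left := DFunLike.congr_fun hs x.left
    rw [← proj_apply, map_mul, map_zpow, hbase, ht, ← map_zpow, ← ofAdd_zsmul, zsmul_one]
    exact SemidirectProduct.inl_left_mul_inr_right x
  · calc s x.left * t ^ x.right.toAdd * (s y.left * t ^ y.right.toAdd)
        = s x.left * (t ^ x.right.toAdd * s y.left) * t ^ y.right.toAdd := by
          simp only [mul_assoc]
      _ = incl (.ofAdd (cocycle k σ χ (x, y))) *
            (s (x.left * (σ ^ x.right.toAdd) y.left) * t ^ (x.right.toAdd + y.right.toAdd)) := by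
          rw [hcomm, map_mul, zpow_add, cocycle_apply, ofAdd_toAdd]
          simp only [mul_assoc, (commute_incl (s x.left) _).left_comm]

theorem H2OfHom_surjective [Subsingleton (H2 (Rep.trivial k A M))] (σ : MulAut A) :
    Function.Surjective (H2OfHom k M σ) := by
  intro c
  induction c using H2_induction_on with | h f => ?_
  obtain ⟨s, hs⟩ := exists_lift f SemidirectProduct.inl
  let t : CentralExtension f := ⟨0, .inr (.ofAdd 1)⟩
  have hproj : proj.comp ((MulAut.conj t).toMonoidHom.comp s) =
      proj.comp (s.comp σ.toMonoidHom) := by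
    refine MonoidHom.ext fun a => ?_
    have hbase (a : A) : proj (s a) = .inl a := DFunLike.congr_fun hs a
    change proj (t * s a * t⁻¹) = proj (s (σ a))
    rw [map_mul, map_mul, map_inv, hbase, hbase, mul_inv_eq_iff_eq_mul]
    exact inr_mul_inl σ a
  obtain ⟨χ, hχ⟩ := exists_eq_incl_mul_of_proj_comp_eq hproj
  exact ⟨χ, congrArg Multiplicative.ofAdd (H2π_eq_of_conj hs rfl hχ).symm⟩

theorem natCard_H2 [Subsingleton (H2 (Rep.trivial k A M))] [Finite (A →* Multiplicative M)]
    (σ : MulAut A) :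
    Nat.card (H2 (Rep.trivial k (MappingTorus σ) M)) =
      Nat.card (pullbackDiv (Multiplicative M) σ).ker :=
  calc Nat.card (H2 (Rep.trivial k (MappingTorus σ) M))
    _ = Nat.card (H2OfHom k M σ).range := by
      rw [MonoidHom.range_eq_top.2 (H2OfHom_surjective σ), Subgroup.card_top]
      rfl
    _ = (pullbackDiv (Multiplicative M) σ).range.index := by
      rw [← Subgroup.index_ker, ker_H2OfHom]
    _ = Nat.card (pullbackDiv (Multiplicative M) σ).ker := Subgroup.index_range

theorem existsUnique_two_torsion_H2 [Subsingleton (H2 (Rep.trivial k A M))]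
    [IsCyclic (A →* Multiplicative M)] [Finite (A →* Multiplicative M)]
    (heven : Even (Nat.card (A →* Multiplicative M))) (σ : MulAut A) :
    ∃! c : H2 (Rep.trivial k (MappingTorus σ) M), c ≠ 0 ∧ 2 • c = 0 := by
  have hsurj := H2OfHom_surjective (k := k) (M := M) σ
  have := isCyclic_of_surjective _ hsurj
  have := Finite.of_surjective _ hsurj
  obtain ⟨c, hc, huniq⟩ := existsUnique_orderOf_eq_two
    (Multiplicative (H2 (Rep.trivial k (MappingTorus σ) M)))
    (natCard_H2 (k := k) (M := M) σ ▸ even_natCard_ker_pullbackDiv σ heven)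
  have htors (d : H2 (Rep.trivial k (MappingTorus σ) M)) :
      orderOf (Multiplicative.ofAdd d) = 2 ↔ d ≠ 0 ∧ 2 • d = 0 :=
    orderOf_eq_prime_iff.trans and_comm
  exact ⟨c.toAdd, (htors _).1 hc, fun d hd => huniq _ ((htors d).2 hd)⟩

end MappingTorus

end SemidirectProduct

section FiniteCyclic

variable {k A : Type u} [CommRing k] [CommGroup A] [IsCyclic A]

theorem subsingleton_groupCohomology_of_even [Fintype A] {V : Rep k A}
    (hV : Function.Surjective V.ρ.norm) (n : ℕ) [NeZero n] (hn : Even n) :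
    Subsingleton (groupCohomology V n) := by
  obtain ⟨g, hg⟩ := IsCyclic.exists_generator (α := A)
  have hexact : (Rep.FiniteCyclicGroup.normHomCompSub V g).Exact :=
    (CategoryTheory.ShortComplex.moduleCat_exact_iff _).2 fun x _ => hV x
  exact ModuleCat.subsingleton_of_isZero
    (((CategoryTheory.ShortComplex.exact_iff_isZero_homology _).1 hexact).of_iso
      (Rep.FiniteCyclicGroup.groupCohomologyIsoEven V g hg n hn))

theorem subsingleton_H2_trivial [Finite A] {M : Type u} [AddCommGroup M] [Module k M]
    (hM : Function.Surjective fun m : M => Nat.card A • m) :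
    Subsingleton (H2 (Rep.trivial k A M)) := by
  have := Fintype.ofFinite A
  refine subsingleton_groupCohomology_of_even (fun x => ?_) 2 even_two
  obtain ⟨y, hy⟩ := hM x
  refine ⟨y, ?_⟩
  simpa [Representation.norm, Nat.card_eq_fintype_card] using hy

end FiniteCyclic

theorem h2_semidirect_cunits_two_torsion_general (A : Type) [CommGroup A] [IsCyclic A] [Finite A]
    (hA : Even (Nat.card A)) (B : Type) [CommMonoid B] [HasEnoughRootsOfUnity B (Nat.card A)]
    (hB : Function.Surjective fun b : Bˣ => b ^ Nat.card A) (σ : MulAut A) :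
    ∃! c : H2 (Rep.trivial ℤ (A ⋊[zpowersHom (MulAut A) σ] Multiplicative ℤ) (Additive Bˣ)),
      c ≠ 0 ∧ 2 • c = 0 := by
  have : Subsingleton (H2 (Rep.trivial ℤ A (Additive Bˣ))) := subsingleton_H2_trivial hB
  obtain ⟨e⟩ := IsCyclic.monoidHom_equiv_self A B
  let e' : (A →* Multiplicative (Additive Bˣ)) ≃* A :=
    (MulEquiv.monoidHomCongrRight (.multiplicativeAdditive Bˣ)).trans e
  have := e'.isCyclic.2 ‹_›
  have := Finite.of_equiv A e'.symm.toEquiv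
  exact MappingTorus.existsUnique_two_torsion_H2 (Nat.card_congr e'.toEquiv ▸ hA) σ

/-- For `q = pⁿ` (`p` an odd prime) and `k` the field with `q²` elements, the 2-torsion
subgroup of `H²(G, ℂˣ)` for `G = kˣ ⋊ ℤ` (where `m ∈ ℤ` acts by the `m`-th power of
`x ↦ x^q`, trivial coefficients) is isomorphic to `ℤ/2ℤ`: there is exactly one nonzero
class `c` with `2 • c = 0`. -/
theorem h2_semidirect_cunits_two_torsion (p n : ℕ) (hp : p.Prime) (hodd : Odd p) (hn : 0 < n)
    (k : Type) [Field k] [Fintype k] (hk : Fintype.card k = (p ^ n) ^ 2)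
    (σ : MulAut kˣ) (hσ : ∀ x : kˣ, σ x = x ^ (p ^ n)) :
    ∃! c : H2 (Rep.trivial ℤ (kˣ ⋊[zpowersHom (MulAut kˣ) σ] Multiplicative ℤ)
        (Additive ℂˣ)), c ≠ 0 ∧ 2 • c = 0 := by
  classical
  have heven : Even (Nat.card kˣ) := by
    rw [Nat.card_eq_fintype_card, Fintype.card_units, hk]
    exact Nat.Odd.sub_odd hodd.pow.pow odd_one
  refine h2_semidirect_cunits_two_torsion_general kˣ heven ℂ (fun z => ?_) σ
  obtain ⟨w, hw⟩ := IsSepClosed.exists_pow_nat_eq (z : ℂ) (Nat.card kˣ)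
  exact ⟨Units.mk0 w (by rintro rfl; exact z.ne_zero (by simpa using hw.symm)), Units.ext hw⟩
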